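/- For a prime p, the class number h(ℚ(√p)) of the real quadratic field ℚ(√p) is odd. -/

import Mathlib

open NumberField

/-! Let `σ` be the nontrivial automorphism of `K = ℚ(√p)`. If the square of an ideal class is
trivial, then Hilbert 90 finds a `σ`-invariant ideal in that class, provided that `-n ^ 2` is not a
norm or that some unit has norm `-1`. An invariant ideal is a product of ideals `(n)`, `(√p)` and,
when `p ≡ 3 mod 4`, the prime `Q` with `Q ^ 2 = (2)`, so only `Q` could fail to be principal.

Since `K` is totally real of degree two, it has a unit `e` such that neither `e` nor `-e` is a
square. If `e` has norm one, then `(1 + e)` is an invariant ideal which has no generator `r` with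
`σ r = ± r`, so it is not a product of ideals `(n)` and `(√p)`. For `p ≢ 3 mod 4` this contradiction
gives a unit of norm `-1`; for `p ≡ 3 mod 4`, where no `-n ^ 2` is a norm, it shows that `(1 + e)`
involves `Q` to an odd power, so that `Q` is principal. -/

open scoped Pointwise

theorem odd_natCard_of_sq_eq_one_imp {G : Type*} [Group G] [Finite G]
    (h : ∀ g : G, g ^ 2 = 1 → g = 1) : Odd (Nat.card G) := by
  rw [← Nat.not_even_iff_odd, even_iff_two_dvd]
  intro h2
  obtain ⟨g, hg⟩ := exists_prime_orderOf_dvd_card' 2 h2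
  rw [orderOf_eq_prime_iff] at hg
  exact hg.2 (h g hg.1)

theorem mem_or_eq_mul_of_mem_sup_powers {M : Type*} [CommMonoid M] {T : Submonoid M} {a x : M}
    (ha : a ^ 2 ∈ T) (hx : x ∈ T ⊔ Submonoid.powers a) : x ∈ T ∨ ∃ y ∈ T, x = y * a := by
  obtain ⟨y, hy, _, ⟨k, rfl⟩, rfl⟩ := Submonoid.mem_sup.1 hx
  obtain ⟨m, rfl | rfl⟩ := k.even_or_odd'
  · exact .inl (mul_mem hy (by simpa only [pow_mul] using pow_mem ha m))
  · refine .inr ⟨y * (a ^ 2) ^ m, mul_mem hy (pow_mem ha m), ?_⟩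
    rw [mul_assoc, ← pow_mul, ← pow_succ]

theorem isPrincipal_of_span_singleton_mul_isPrincipal {R : Type*} [CommRing R] [IsDomain R]
    {c : R} (hc : c ≠ 0) {I : Ideal R} (h : (Ideal.span {c} * I).IsPrincipal) :
    I.IsPrincipal := by
  obtain ⟨d, hd : Ideal.span {c} * I = Ideal.span {d}⟩ := h
  obtain ⟨x, -, rfl⟩ := Ideal.mem_span_singleton_mul.1 (hd.ge (Ideal.mem_span_singleton_self d))
  refine ⟨x, (Ideal.span_singleton_mul_right_inj hc).1 ?_⟩
  rw [hd, Ideal.submodule_span_eq, Ideal.span_singleton_mul_span_singleton]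

section Involution

variable {R G : Type*} [CommRing R] [Group G] [MulSemiringAction G R] (σ : G)

theorem smul_ideal_span_singleton (r : R) :
    σ • Ideal.span {r} = Ideal.span {σ • r} := by
  rw [Ideal.smul_closure, Set.smul_set_singleton]

/-- The ideals generated by an eigenvector of `σ` for one of the eigenvalues `±1`. -/
def signedPrincipalSubmonoid : Submonoid (Ideal R) where
  carrier := {I | ∃ r : R, (σ • r = r ∨ σ • r = -r) ∧ I = Ideal.span {r}}
  one_mem' := ⟨1, .inl (smul_one σ), Ideal.one_eq_top.trans Ideal.span_singleton_one.symm⟩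
  mul_mem' := by
    rintro _ _ ⟨r, hr, rfl⟩ ⟨s, hs, rfl⟩
    refine ⟨r * s, ?_, Ideal.span_singleton_mul_span_singleton r s⟩
    rcases hr with hr | hr <;> rcases hs with hs | hs <;> simp [smul_mul', hr, hs]

variable {σ}

theorem span_natCast_mem_signedPrincipalSubmonoid (n : ℕ) :
    Ideal.span {(n : R)} ∈ signedPrincipalSubmonoid σ :=
  ⟨n, .inl (map_natCast (MulSemiringAction.toRingHom G R σ) n), rfl⟩

theorem signedPrincipalSubmonoid_le_isPrincipalSubmonoid :
    signedPrincipalSubmonoid σ ≤ Ideal.isPrincipalSubmonoid R := by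
  rintro _ ⟨r, -, rfl⟩
  exact Ideal.span_singleton_mem_isPrincipalSubmonoid r

/-- Factor `1 + e = e * σ (1 + e)` as `r * v` with `σ r = ±r`: then `v = ±e * σ v`, so `v ^ 2` is
`e` times the sign `±v * σ v`. -/
theorem isSquare_or_isSquare_neg_of_span_one_add_mem [IsDomain R]
    (hσ : ∀ u : Rˣ, (u : R) * σ • (u : R) = 1 ∨ (u : R) * σ • (u : R) = -1) {e : Rˣ}
    (he : (e : R) * σ • (e : R) = 1)
    (h : Ideal.span {1 + (e : R)} ∈ signedPrincipalSubmonoid σ) : IsSquare e ∨ IsSquare (-e) := by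
  by_cases h0 : 1 + (e : R) = 0
  · refine .inr ⟨1, Units.ext ?_⟩
    push_cast
    linear_combination -h0
  obtain ⟨r, hr, hrI⟩ := h
  obtain ⟨v, hv⟩ := Ideal.span_singleton_eq_span_singleton.1 hrI.symm
  have hr0 : r ≠ 0 := by
    rintro rfl
    exact h0 (by rw [← hv, zero_mul])
  have hself : r * v = e * (σ • r * σ • (v : R)) := by
    rw [← smul_mul', hv, smul_add, smul_one]
    linear_combination -he
  have hve : (v : R) = e * σ • (v : R) ∨ (v : R) = -(e * σ • (v : R)) := by
    refine hr.imp (fun hr ↦ mul_left_cancel₀ hr0 ?_) (fun hr ↦ mul_left_cancel₀ hr0 ?_) <;>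
      rw [hself, hr] <;> ring
  have hsq : (v : R) ^ 2 = e ∨ (v : R) ^ 2 = -e := by
    rcases hve with hve | hve <;> rcases hσ v with hN | hN
    · exact .inl (by linear_combination (v : R) * hve + e * hN)
    · exact .inr (by linear_combination (v : R) * hve + e * hN)
    · exact .inr (by linear_combination (v : R) * hve - e * hN)
    · exact .inl (by linear_combination (v : R) * hve - e * hN)
  refine hsq.imp (fun h ↦ ⟨v, Units.ext ?_⟩) (fun h ↦ ⟨v, Units.ext ?_⟩) <;>
    simp [← h, sq]

/-- Hilbert 90: `α / n` has norm one, and `n + σ α` witnesses it as a coboundary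
(unless `α = -n`). -/
theorem exists_smul_span_mul_eq [IsDedekindDomain R] (hσ : σ ^ 2 = 1) {I : Ideal R} {α n : R}
    (hn0 : n ≠ 0) (hn : σ • n = n) (hα : α * σ • α = n ^ 2) (hI : I ^ 2 = Ideal.span {α})
    (hIσ : I * σ • I = Ideal.span {n}) :
    ∃ c : R, c ≠ 0 ∧ σ • (Ideal.span {c} * I) = Ideal.span {c} * I := by
  have hI0 : I ≠ 0 := by
    rintro rfl
    rw [zero_mul, eq_comm, Ideal.zero_eq_bot, Ideal.span_singleton_eq_bot] at hIσ
    exact hn0 hIσ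
  suffices ∃ c : R, c ≠ 0 ∧ Ideal.span {σ • c * n} = Ideal.span {c * α} by
    obtain ⟨c, hc0, hc⟩ := this
    refine ⟨c, hc0, mul_left_cancel₀ hI0 ?_⟩
    rw [smul_mul', smul_ideal_span_singleton, mul_left_comm, hIσ, mul_left_comm, ← sq, hI,
      Ideal.span_singleton_mul_span_singleton, Ideal.span_singleton_mul_span_singleton, hc]
  by_cases hc : n + σ • α = 0
  · have hαn : α = -n := mul_right_cancel₀ hn0 (by linear_combination α * hc - hα)
    exact ⟨1, one_ne_zero, by rw [smul_one, one_mul, one_mul, hαn, Ideal.span_singleton_neg]⟩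
  · refine ⟨n + σ • α, hc, ?_⟩
    rw [smul_add, hn, smul_smul, ← sq, hσ, one_smul]
    congr 2
    linear_combination -hα

theorem mul_smul_dvd_of_smul_eq [IsDedekindDomain R] {P J : Ideal R} (hP : P.IsMaximal)
    (hJ0 : J ≠ ⊥) (hJ : σ • J = J) (hJP : J ≤ P) (hPσ : σ • P ≠ P) : P * σ • P ∣ J := by
  have hJσP : J ≤ σ • P := by
    rw [← hJ]
    exact smul_mono_right σ hJP
  have hσP : (σ • P).IsMaximal :=
    (hP.isPrime.smul σ).isMaximal (ne_bot_of_le_ne_bot hJ0 hJσP)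
  obtain ⟨L, rfl⟩ := Ideal.dvd_iff_le.2 hJP
  have hL : L ≤ σ • P := (hσP.isPrime.mul_le.1 hJσP).resolve_left fun h ↦
    hPσ (hP.eq_of_le hσP.ne_top h).symm
  exact mul_dvd_mul_left P (Ideal.dvd_iff_le.2 hL)

theorem mem_of_smul_eq [IsDedekindDomain R] (hσ : σ ^ 2 = 1) {M : Submonoid (Ideal R)}
    (hinv : ∀ P : Ideal R, P.IsPrime → P ≠ ⊥ → σ • P = P → P ∈ M)
    (hnorm : ∀ P : Ideal R, P * σ • P ∈ M) {J : Ideal R} (hJ0 : J ≠ ⊥)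
    (hJ : σ • J = J) : J ∈ M := by
  induction J using WellFoundedGT.induction with
  | ind J ih =>
  by_cases hJtop : J = ⊤
  · rw [hJtop, ← Ideal.one_eq_top]
    exact one_mem M
  obtain ⟨P, hP, hJP⟩ := Ideal.exists_le_maximal J hJtop
  have hdescend {A : Ideal R} (hAP : A ≤ P) (hAσ : σ • A = A) (hAM : A ∈ M)
      (hAJ : A ∣ J) : J ∈ M := by
    obtain ⟨L, rfl⟩ := hAJ
    have hA0 : A ≠ ⊥ := by
      rintro rfl
      exact hJ0 (Ideal.bot_mul L)
    have hL0 : L ≠ ⊥ := by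
      rintro rfl
      exact hJ0 (Ideal.mul_bot A)
    have hLσ : σ • L = L := mul_left_cancel₀ hA0 (by rwa [smul_mul', hAσ] at hJ)
    have hAunit : ¬IsUnit A := fun hA ↦
      hP.ne_top (top_le_iff.1 (hAP.trans' (Ideal.isUnit_iff.1 hA).ge))
    have hLA : DvdNotUnit L (A * L) := ⟨hL0, A, hAunit, mul_comm A L⟩
    exact mul_mem hAM (ih L (Ideal.dvdNotUnit_iff_lt.1 hLA) hL0 hLσ)
  by_cases hPσ : σ • P = P
  · exact hdescend le_rfl hPσ (hinv P hP.isPrime (ne_bot_of_le_ne_bot hJ0 hJP) hPσ)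
      (Ideal.dvd_iff_le.2 hJP)
  · refine hdescend (A := P * σ • P) Ideal.mul_le_left ?_ (hnorm P)
      (mul_smul_dvd_of_smul_eq hP hJ0 hJ hJP hPσ)
    rw [smul_mul', smul_smul σ σ P, ← sq, hσ, one_smul, mul_comm]

end Involution

section PrimeIdeal

variable {R : Type*} [CommRing R]

theorem natPrime_eq_of_mem_ideal {P : Ideal R} (hP : P ≠ ⊤) {p q : ℕ} (hp : p.Prime)
    (hq : q.Prime) (hpP : (p : R) ∈ P) (hqP : (q : R) ∈ P) : p = q := by
  by_contra hpq
  refine hP (P.eq_top_of_isUnit_mem ?_ isUnit_one)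
  obtain ⟨a, b, hab⟩ := ((Nat.coprime_primes hp hq).2 hpq).isCoprime.intCast (R := R)
  rw [← hab]
  push_cast
  exact P.add_mem (P.mul_mem_left _ hpP) (P.mul_mem_left _ hqP)

theorem sub_smul_mem_of_prime_card_quotient {G : Type*} [Group G] [MulSemiringAction G R] {σ : G}
    {P : Ideal R} (hP : (Nat.card (R ⧸ P)).Prime) (hPσ : σ • P = P) (x : R) : x - σ • x ∈ P := by
  obtain ⟨n, hn⟩ : ∃ n : ℤ, x - n ∈ P := by
    have : Finite (R ⧸ P) := Nat.finite_of_card_ne_zero hP.ne_zero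
    have : Fintype (R ⧸ P) := Fintype.ofFinite _
    have e := ZMod.ringEquivOfPrime (R ⧸ P) hP Nat.card_eq_fintype_card.symm
    obtain ⟨n, hn⟩ := ZMod.intCast_surjective (e.symm (Ideal.Quotient.mk P x))
    refine ⟨n, Ideal.Quotient.eq.1 ?_⟩
    rw [← e.apply_symm_apply (Ideal.Quotient.mk P x), ← hn, map_intCast, map_intCast]
  have hσn : σ • x - n ∈ P := by
    have := Ideal.smul_mem_pointwise_smul σ _ P hn
    rwa [hPσ, smul_sub, ← MulSemiringAction.toRingHom_apply G R σ (n : R), map_intCast] at this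
  simpa using P.sub_mem hn hσn

end PrimeIdeal

section Galois

variable {K : Type*} [Field K] [NumberField K]

theorem absNorm_gal_smul (σ : Gal(K/ℚ)) (I : Ideal (𝓞 K)) :
    Ideal.absNorm (σ • I) = Ideal.absNorm I := by
  rw [← Ideal.absNorm_relNorm ℤ, Ideal.relNorm_smul, Ideal.absNorm_relNorm]

variable [IsGalois ℚ K]

theorem prod_gal_smul_eq_norm (x : 𝓞 K) :
    ∏ σ : Gal(K/ℚ), σ • x = ((Algebra.norm ℤ x : ℤ) : 𝓞 K) := by
  apply RingOfIntegers.ext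
  have h := Algebra.norm_eq_prod_automorphisms ℚ (x : K)
  rw [← Algebra.coe_norm_int, map_intCast] at h
  change algebraMap (𝓞 K) K _ = _
  rw [map_prod]
  exact h.symm

theorem span_absNorm_le_prod_gal_smul (I : Ideal (𝓞 K)) :
    Ideal.span {(Ideal.absNorm I : 𝓞 K)} ≤ ∏ σ : Gal(K/ℚ), σ • I := by
  have h : (Ideal.relNorm ℤ I).map (algebraMap ℤ (𝓞 K)) =
      Ideal.span {(Ideal.absNorm I : 𝓞 K)} := by
    rw [Ideal.relNorm_int, Ideal.map_span, Set.image_singleton, map_natCast]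
  rw [← h, Ideal.map_relNorm, Ideal.span_le]
  rintro _ ⟨x, hx, rfl⟩
  rw [Function.comp_apply, Algebra.intNorm_eq_norm, eq_intCast, ← prod_gal_smul_eq_norm]
  exact Ideal.prod_mem_prod fun σ _ ↦ Ideal.smul_mem_pointwise_smul σ x I hx

theorem prod_gal_smul_ideal_eq_span_absNorm (I : Ideal (𝓞 K)) :
    ∏ σ : Gal(K/ℚ), σ • I = Ideal.span {(Ideal.absNorm I : 𝓞 K)} := by
  by_cases hI : I = ⊥
  · rw [hI, Finset.prod_congr rfl fun σ _ ↦ Ideal.smul_bot σ, Finset.prod_const, Finset.card_univ,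
      ← Ideal.zero_eq_bot, zero_pow Fintype.card_ne_zero]
    simp
  have hN : Ideal.absNorm (∏ σ : Gal(K/ℚ), σ • I) =
      Ideal.absNorm (Ideal.span {(Ideal.absNorm I : 𝓞 K)}) := by
    rw [map_prod, Finset.prod_congr rfl fun σ _ ↦ absNorm_gal_smul σ I, Finset.prod_const,
      Finset.card_univ, ← Nat.card_eq_fintype_card, IsGalois.card_aut_eq_finrank,
      Ideal.absNorm_span_natCast, RingOfIntegers.rank]
  obtain ⟨L, hL⟩ := Ideal.dvd_iff_le.2 (span_absNorm_le_prod_gal_smul I)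
  have hprod0 : Ideal.absNorm (∏ σ : Gal(K/ℚ), σ • I) ≠ 0 := by
    simp [hN, Ideal.absNorm_eq_zero_iff, hI]
  have hL1 : Ideal.absNorm L = 1 := by
    rwa [hL, map_mul, eq_comm, mul_eq_left₀ hprod0] at hN
  rw [hL, Ideal.absNorm_eq_one_iff.1 hL1, Ideal.mul_top]

end Galois

section Units

variable {K : Type*} [Field K] [NumberField K]

theorem exists_unit_forall_torsion_not_isSquare_mul (hrank : 0 < Units.rank K) :
    ∃ e : (𝓞 K)ˣ, ∀ ζ ∈ Units.torsion K, ¬IsSquare (ζ * e) := by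
  let i : Fin (Units.rank K) := ⟨0, hrank⟩
  refine ⟨Units.fundSystem K i, fun ζ hζ ⟨u, hu⟩ ↦ ?_⟩
  obtain ⟨⟨ξ, f⟩, hf, -⟩ := Units.exist_unique_eq_mul_prod K u
  have hsingle : Pi.single i 1 = _ := Units.fun_eq_repr K (x := u * u) hζ (by
    rw [← hu, Fintype.prod_eq_single i fun j hj ↦ by rw [Pi.single_eq_of_ne hj, zpow_zero],
      Pi.single_eq_same, zpow_one])
  have hdouble : f + f = _ := Units.fun_eq_repr K (x := u * u) (mul_mem ξ.2 ξ.2) (by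
    simp only [Pi.add_apply, zpow_add, Finset.prod_mul_distrib]
    rw [mul_mul_mul_comm, ← hf])
  have hone : 1 = f i + f i := by simpa using congrFun (hsingle.trans hdouble.symm) i
  omega

theorem exists_unit_not_isSquare_and_not_isSquare_neg (hrank : 0 < Units.rank K) :
    ∃ e : (𝓞 K)ˣ, ¬IsSquare e ∧ ¬IsSquare (-e) := by
  obtain ⟨e, he⟩ := exists_unit_forall_torsion_not_isSquare_mul hrank
  have hneg : (-1 : (𝓞 K)ˣ) ∈ Units.torsion K := by
    rw [Units.torsion, CommGroup.mem_torsion, isOfFinOrder_iff_pow_eq_one]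
    exact ⟨2, two_pos, neg_one_sq⟩
  exact ⟨e, by simpa using he 1 (one_mem _), by simpa using he (-1) hneg⟩

end Units

section Quadratic

variable {K : Type*} [Field K] [NumberField K] [Algebra.IsQuadraticExtension ℚ K]

theorem natCard_gal_quadratic : Nat.card Gal(K/ℚ) = 2 := by
  rw [IsGalois.card_aut_eq_finrank, Algebra.IsQuadraticExtension.finrank_eq_two]

theorem gal_quadratic_sq_eq_one (σ : Gal(K/ℚ)) : σ ^ 2 = 1 := by
  rw [← natCard_gal_quadratic (K := K), pow_card_eq_one']

variable {σ : Gal(K/ℚ)}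

theorem prod_gal_quadratic (hσ : σ ≠ 1) {M : Type*} [CommMonoid M] (f : Gal(K/ℚ) → M) :
    ∏ τ : Gal(K/ℚ), f τ = f 1 * f σ := by
  classical
  have huniv : ({1, σ} : Finset Gal(K/ℚ)) = Finset.univ := by
    rw [← Finset.card_eq_iff_eq_univ, Finset.card_pair hσ.symm, ← Nat.card_eq_fintype_card,
      natCard_gal_quadratic]
  rw [← huniv, Finset.prod_pair hσ.symm]

theorem mul_smul_eq_norm (hσ : σ ≠ 1) (x : 𝓞 K) : x * σ • x = ((Algebra.norm ℤ x : ℤ) : 𝓞 K) := by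
  rw [← prod_gal_smul_eq_norm, prod_gal_quadratic hσ, one_smul]

theorem mul_smul_eq_span_absNorm (hσ : σ ≠ 1) (I : Ideal (𝓞 K)) :
    I * σ • I = Ideal.span {(Ideal.absNorm I : 𝓞 K)} := by
  rw [← prod_gal_smul_ideal_eq_span_absNorm, prod_gal_quadratic hσ, one_smul]

theorem exists_intCast_eq_add_smul (hσ : σ ≠ 1) (x : 𝓞 K) : ∃ a : ℤ, (a : 𝓞 K) = x + σ • x := by
  refine ⟨Algebra.norm ℤ (1 + x) - 1 - Algebra.norm ℤ x, ?_⟩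
  push_cast
  rw [← mul_smul_eq_norm hσ, ← mul_smul_eq_norm hσ, smul_add, smul_one]
  ring

theorem unit_mul_smul_eq_one_or_neg_one (hσ : σ ≠ 1) (u : (𝓞 K)ˣ) :
    (u : 𝓞 K) * σ • (u : 𝓞 K) = 1 ∨ (u : 𝓞 K) * σ • (u : 𝓞 K) = -1 := by
  rw [mul_smul_eq_norm hσ]
  refine (Int.isUnit_iff.1 (u.isUnit.map (Algebra.norm ℤ))).imp (fun h ↦ ?_) (fun h ↦ ?_) <;>
    simp [h]

theorem exists_span_singleton_mul_smul_eq (hσ : σ ≠ 1)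
    (hneg : (∃ u : (𝓞 K)ˣ, Algebra.norm ℤ (u : 𝓞 K) = -1) ∨
      ∀ (x : 𝓞 K) (n : ℤ), n ≠ 0 → Algebra.norm ℤ x ≠ -n ^ 2)
    {I : Ideal (𝓞 K)} (hI0 : I ≠ ⊥) (hI : (I ^ 2).IsPrincipal) :
    ∃ c : 𝓞 K, c ≠ 0 ∧ σ • (Ideal.span {c} * I) = Ideal.span {c} * I := by
  obtain ⟨α, hα : I ^ 2 = Ideal.span {α}⟩ := hI
  set n := Ideal.absNorm I
  have hn0 : n ≠ 0 := fun h ↦ hI0 (Ideal.absNorm_eq_zero_iff.1 h)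
  have hNα : Algebra.norm ℤ α = (n : ℤ) ^ 2 ∨ Algebra.norm ℤ α = -(n : ℤ) ^ 2 := by
    rw [← Int.natAbs_eq_natAbs_iff, ← Ideal.absNorm_span_singleton, ← hα, map_pow, Int.natAbs_pow,
      Int.natAbs_natCast]
  obtain ⟨β, hβ, hNβ⟩ : ∃ β : 𝓞 K, I ^ 2 = Ideal.span {β} ∧ Algebra.norm ℤ β = (n : ℤ) ^ 2 := by
    rcases hNα, hneg with ⟨hNα | hNα, ⟨u, hu⟩ | hneg⟩
    · exact ⟨α, hα, hNα⟩
    · exact ⟨α, hα, hNα⟩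
    · refine ⟨α * u, ?_, ?_⟩
      · rw [hα, Ideal.span_singleton_mul_right_unit u.isUnit]
      · rw [map_mul, hNα, hu, mul_neg_one, neg_neg]
    · exact absurd hNα (hneg α n (by exact_mod_cast hn0))
  refine exists_smul_span_mul_eq (gal_quadratic_sq_eq_one σ) (Nat.cast_ne_zero.2 hn0) ?_ ?_ hβ
    (mul_smul_eq_span_absNorm hσ I)
  · exact map_natCast (MulSemiringAction.toRingHom Gal(K/ℚ) (𝓞 K) σ) n
  · rw [mul_smul_eq_norm hσ, hNβ]
    push_cast
    rfl

theorem odd_classNumber_of_isPrincipal_of_smul_eq (hσ : σ ≠ 1)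
    (hneg : (∃ u : (𝓞 K)ˣ, Algebra.norm ℤ (u : 𝓞 K) = -1) ∨
      ∀ (x : 𝓞 K) (n : ℤ), n ≠ 0 → Algebra.norm ℤ x ≠ -n ^ 2)
    (hinv : ∀ J : Ideal (𝓞 K), J ≠ ⊥ → σ • J = J → J.IsPrincipal) :
    Odd (classNumber K) := by
  rw [classNumber, ← Nat.card_eq_fintype_card]
  refine odd_natCard_of_sq_eq_one_imp fun g hg ↦ ?_
  obtain ⟨⟨I, hI⟩, rfl⟩ := ClassGroup.mk0_surjective g
  have hI0 : I ≠ ⊥ := mem_nonZeroDivisors_iff_ne_zero.1 hI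
  rw [← map_pow, SubmonoidClass.mk_pow, ClassGroup.mk0_eq_one_iff] at hg
  obtain ⟨c, hc0, hc⟩ := exists_span_singleton_mul_smul_eq hσ hneg hI0 hg
  rw [ClassGroup.mk0_eq_one_iff]
  refine isPrincipal_of_span_singleton_mul_isPrincipal hc0 (hinv _ (mul_ne_zero ?_ hI0) hc)
  simpa using hc0

end Quadratic

section SqrtPrime

theorem eq_zero_of_prime_mul_sq_eq_sq_add_sq {p : ℕ} (hp : p.Prime) (h3 : p % 4 = 3) {a b d : ℤ}
    (h : p * d ^ 2 = a ^ 2 + b ^ 2) : d = 0 := by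
  by_contra hd
  have hd' : d.natAbs ≠ 0 := Int.natAbs_ne_zero.2 hd
  have hnat : p * d.natAbs ^ 2 = a.natAbs ^ 2 + b.natAbs ^ 2 := by
    zify
    simpa only [sq_abs] using h
  have heven : Even (padicValNat p (p * d.natAbs ^ 2)) :=
    Nat.eq_sq_add_sq_iff.1 ⟨_, _, hnat⟩ p (by simp [hp, hp.ne_zero, hd']) h3
  have := Fact.mk hp
  rw [padicValNat.mul hp.ne_zero (pow_ne_zero 2 hd'), padicValNat.pow, padicValNat_self] at heven
  exact Nat.not_even_iff_odd.2 (odd_one.add_even (even_two_mul _)) heven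

variable {K : Type*} [Field K] [NumberField K] {σ : Gal(K/ℚ)} {p : ℕ} {t : 𝓞 K}

theorem exists_add_smul_eq_one (h1 : p % 4 = 1) (ht : t ^ 2 = p) (hσt : σ • t = -t) :
    ∃ w : 𝓞 K, w + σ • w = 1 := by
  obtain ⟨k, rfl⟩ : ∃ k : ℕ, p = 4 * k + 1 := ⟨p / 4, by omega⟩
  have htK : (t : K) ^ 2 = 4 * k + 1 := by
    rw [← map_pow, ht, map_natCast]
    push_cast
    rfl
  have hw : IsIntegral ℤ ((1 + t : K) / 2) := by
    refine ⟨Polynomial.X ^ 2 - (Polynomial.X + Polynomial.C (k : ℤ)), ?_, ?_⟩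
    · apply Polynomial.monic_X_pow_sub
      compute_degree!
    · rw [Polynomial.eval₂_sub, Polynomial.eval₂_add, Polynomial.eval₂_pow, Polynomial.eval₂_X,
        Polynomial.eval₂_C, map_natCast]
      linear_combination htK / 4
  have hσtK : σ (t : K) = -t := congrArg (algebraMap (𝓞 K) K) hσt
  refine ⟨⟨_, hw⟩, RingOfIntegers.ext ?_⟩
  change (1 + t : K) / 2 + σ ((1 + t : K) / 2) = 1
  rw [map_div₀, map_add, map_one, hσtK, map_ofNat]
  ring

variable [Algebra.IsQuadraticExtension ℚ K]

theorem isTotallyReal_of_sq_eq_natCast (ht : t ^ 2 = p) (ht0 : t ≠ 0) (hσt : σ • t = -t) :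
    IsTotallyReal K := by
  rw [← maximalRealSubfield_eq_top_iff_isTotallyReal]
  have := IntermediateField.isSimpleOrder_of_finrank_prime ℚ K
    (by rw [Algebra.IsQuadraticExtension.finrank_eq_two]; exact Nat.prime_two)
  let E : IntermediateField ℚ K :=
    (maximalRealSubfield K).toIntermediateField fun r ↦ SubfieldClass.ratCast_mem _ r
  have htE : (t : K) ∈ E := fun φ ↦ by
    have hφ : φ t ^ 2 = ((√p : ℝ) : ℂ) ^ 2 := by
      rw [← Complex.ofReal_pow, Real.sq_sqrt p.cast_nonneg, Complex.ofReal_natCast, ← map_pow,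
        ← map_natCast φ]
      exact congrArg φ (by simpa using congrArg (algebraMap (𝓞 K) K) ht)
    rcases sq_eq_sq_iff_eq_or_eq_neg.1 hφ with h | h <;> simp [h]
  have hE : E ≠ ⊥ := by
    intro hbot
    obtain ⟨r, hr⟩ := IntermediateField.mem_bot.1 (hbot ▸ htE)
    have hfix : σ • t = t := RingOfIntegers.ext <| by
      change σ (t : K) = t
      rw [← hr, AlgEquiv.commutes]
    exact ht0 (self_eq_neg.1 (hfix.symm.trans hσt))
  have hEtop : E = ⊤ := (eq_bot_or_eq_top E).resolve_left hE
  exact congrArg IntermediateField.toSubfield hEtop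

theorem exists_unit_not_isSquare_of_sq_eq_natCast (ht : t ^ 2 = p) (ht0 : t ≠ 0)
    (hσt : σ • t = -t) : ∃ e : (𝓞 K)ˣ, ¬IsSquare e ∧ ¬IsSquare (-e) := by
  have := isTotallyReal_of_sq_eq_natCast ht ht0 hσt
  apply exists_unit_not_isSquare_and_not_isSquare_neg
  have hreal := IsTotallyReal.finrank K
  rw [Algebra.IsQuadraticExtension.finrank_eq_two] at hreal
  rw [Units.rank, InfinitePlace.card_eq_nrRealPlaces_add_nrComplexPlaces, ← hreal]
  omega

theorem exists_prime_eq_span_or_sq_eq_span (hσ : σ ≠ 1) {P : Ideal (𝓞 K)} [P.IsPrime]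
    (hP0 : P ≠ ⊥) (hPσ : σ • P = P) :
    ∃ q : ℕ, q.Prime ∧ (P = Ideal.span {(q : 𝓞 K)} ∨
      Ideal.absNorm P = q ∧ P ^ 2 = Ideal.span {(q : 𝓞 K)}) := by
  have : P.IsMaximal := ‹P.IsPrime›.isMaximal hP0
  have hsq : P ^ 2 = Ideal.span {(Ideal.absNorm P : 𝓞 K)} := by
    rw [← mul_smul_eq_span_absNorm hσ, hPσ, sq]
  obtain ⟨q, f, hf, hqP, hq, hPf⟩ := Ideal.exists_prime_and_absNorm_eq_pow P
  have hf2 : f ≤ 2 := by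
    have hdvd := Ideal.absNorm_dvd_absNorm_of_le ((Ideal.span_singleton_le_iff_mem P).2 hqP)
    rw [hPf, Ideal.absNorm_span_natCast, RingOfIntegers.rank,
      Algebra.IsQuadraticExtension.finrank_eq_two] at hdvd
    exact (Nat.pow_dvd_pow_iff_le_right hq.one_lt).1 hdvd
  refine ⟨q, hq, ?_⟩
  obtain rfl | rfl : f = 1 ∨ f = 2 := by omega
  · rw [pow_one] at hPf
    exact .inr ⟨hPf, hPf ▸ hsq⟩
  · left
    rw [hPf, Nat.cast_pow, ← Ideal.span_singleton_pow] at hsq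
    exact pow_left_injective two_ne_zero hsq

theorem smul_sqrt_prime (hp : p.Prime) (ht : t ^ 2 = p) (hσ : σ ≠ 1) : σ • t = -t := by
  have hsq : (σ • t) ^ 2 = t ^ 2 := by
    rw [← smul_pow', ht]
    exact map_natCast (MulSemiringAction.toRingHom Gal(K/ℚ) (𝓞 K) σ) p
  refine (sq_eq_sq_iff_eq_or_eq_neg.1 hsq).resolve_left fun hfix ↦ ?_
  obtain ⟨a, ha⟩ := exists_intCast_eq_add_smul hσ t
  have ha2 : a ^ 2 = 4 * p := by
    have : (a : 𝓞 K) ^ 2 = 4 * p := by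
      rw [ha, hfix, ← ht]
      ring
    exact_mod_cast this
  obtain ⟨b, rfl⟩ : (2 : ℤ) ∣ a :=
    Int.prime_two.dvd_of_dvd_pow (n := 2) ⟨2 * p, by rw [ha2]; ring⟩
  exact (Nat.prime_iff_prime_int.1 hp).not_isSquare ⟨b, by linarith⟩

/-- Writing `a = x + σ x`, a solution makes `p * (a ^ 2 + 4 * n ^ 2)` a square, hence `p` times a
square a sum of two squares. -/
theorem norm_ne_neg_sq (hp : p.Prime) (h3 : p % 4 = 3) (ht : t ^ 2 = p) (hσ : σ ≠ 1) (x : 𝓞 K)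
    (n : ℤ) (hn : n ≠ 0) : Algebra.norm ℤ x ≠ -n ^ 2 := by
  intro hx
  obtain ⟨a, ha⟩ := exists_intCast_eq_add_smul hσ x
  obtain ⟨d, hd⟩ := exists_intCast_eq_add_smul hσ (t * x)
  have hN : x * σ • x = -(n : 𝓞 K) ^ 2 := by
    rw [mul_smul_eq_norm hσ, hx]
    push_cast
    rfl
  have hdisc : d ^ 2 = p * (a ^ 2 + 4 * n ^ 2) := by
    have : (d : 𝓞 K) ^ 2 = p * ((a : 𝓞 K) ^ 2 + 4 * (n : 𝓞 K) ^ 2) := by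
      rw [ha, hd, smul_mul', smul_sqrt_prime hp ht hσ, ← ht]
      linear_combination -4 * t ^ 2 * hN
    exact_mod_cast this
  have hd0 : d = 0 := eq_zero_of_prime_mul_sq_eq_sq_add_sq hp h3 (a := p * a) (b := 2 * p * n)
    (by rw [hdisc]; ring)
  have hp0 : (p : ℤ) ≠ 0 := by exact_mod_cast hp.ne_zero
  have hsum : a ^ 2 + 4 * n ^ 2 = 0 := by
    rw [hd0, zero_pow two_ne_zero] at hdisc
    exact (mul_eq_zero.1 hdisc.symm).resolve_left hp0
  exact hn (pow_eq_zero_iff two_ne_zero |>.1 (by nlinarith [sq_nonneg a, sq_nonneg n]))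

theorem mem_signedPrincipalSubmonoid_or_sq_eq_span_two (hp : p.Prime) (ht : t ^ 2 = p)
    (hσ : σ ≠ 1) {P : Ideal (𝓞 K)} [P.IsPrime] (hP0 : P ≠ ⊥) (hPσ : σ • P = P) :
    P ∈ signedPrincipalSubmonoid σ ∨ p % 4 = 3 ∧ P ^ 2 = Ideal.span {2} := by
  obtain ⟨q, hq, rfl | ⟨hPq, hsq⟩⟩ := exists_prime_eq_span_or_sq_eq_span hσ hP0 hPσ
  · exact .inl (span_natCast_mem_signedPrincipalSubmonoid q)
  have hσt := smul_sqrt_prime hp ht hσ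
  have hqP : (q : 𝓞 K) ∈ P :=
    Ideal.pow_le_self two_ne_zero (hsq ▸ Ideal.mem_span_singleton_self _)
  have hcard : (Nat.card (𝓞 K ⧸ P)).Prime := by
    rwa [← Submodule.cardQuot_apply, ← Ideal.absNorm_apply, hPq]
  have hinertia := sub_smul_mem_of_prime_card_quotient hcard hPσ
  by_cases htP : t ∈ P
  · have hpP : (p : 𝓞 K) ∈ P := ht ▸ P.pow_mem_of_mem htP 2 two_pos
    obtain rfl := natPrime_eq_of_mem_ideal ‹P.IsPrime›.ne_top hp hq hpP hqP
    refine .inl ⟨t, .inr hσt, pow_left_injective two_ne_zero ?_⟩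
    simp only [hsq, Ideal.span_singleton_pow, ht]
  · have h2P : (2 : 𝓞 K) ∈ P := by
      have h2t := hinertia t
      rw [hσt, sub_neg_eq_add, ← two_mul] at h2t
      exact (‹P.IsPrime›.mem_or_mem h2t).resolve_right htP
    obtain rfl := natPrime_eq_of_mem_ideal ‹P.IsPrime›.ne_top Nat.prime_two hq
      (by exact_mod_cast h2P) hqP
    have hp2 : p ≠ 2 := by
      rintro rfl
      exact htP (‹P.IsPrime›.mem_of_pow_mem 2 (ht ▸ hqP))
    have hp1 : p % 4 ≠ 1 := fun h1 ↦ by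
      obtain ⟨w, hw⟩ := exists_add_smul_eq_one h1 ht hσt
      refine ‹P.IsPrime›.ne_top (P.eq_top_iff_one.2 ?_)
      have hone : (1 : 𝓞 K) = w * 2 - (w - σ • w) := by linear_combination -hw
      exact hone ▸ P.sub_mem (P.mul_mem_left w h2P) (hinertia w)
    have hp3 : p % 4 = 3 := by
      have := hp.eq_two_or_odd
      omega
    exact .inr ⟨hp3, hsq⟩

theorem mem_of_smul_eq_of_sqrt_prime (hp : p.Prime) (ht : t ^ 2 = p) (hσ : σ ≠ 1)
    {M : Submonoid (Ideal (𝓞 K))} (hT : signedPrincipalSubmonoid σ ≤ M)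
    (hM : p % 4 = 3 → ∀ Q : Ideal (𝓞 K), Q ^ 2 = Ideal.span {2} → Q ∈ M) {J : Ideal (𝓞 K)}
    (hJ0 : J ≠ ⊥) (hJ : σ • J = J) : J ∈ M := by
  refine mem_of_smul_eq (gal_quadratic_sq_eq_one σ) (fun P hP hP0 hPσ ↦ ?_) (fun P ↦ ?_) hJ0 hJ
  · rcases mem_signedPrincipalSubmonoid_or_sq_eq_span_two hp ht hσ hP0 hPσ with h | ⟨h3, h⟩
    · exact hT h
    · exact hM h3 P h
  · rw [mul_smul_eq_span_absNorm hσ]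
    exact hT (span_natCast_mem_signedPrincipalSubmonoid _)

theorem exists_smul_span_eq_and_notMem_signedPrincipalSubmonoid (hp : p.Prime) (ht : t ^ 2 = p)
    (hσ : σ ≠ 1) (hnorm : ∀ u : (𝓞 K)ˣ, Algebra.norm ℤ (u : 𝓞 K) ≠ -1) :
    ∃ x : 𝓞 K, x ≠ 0 ∧ σ • Ideal.span {x} = Ideal.span {x} ∧
      Ideal.span {x} ∉ signedPrincipalSubmonoid σ := by
  have ht0 : t ≠ 0 := by
    rintro rfl
    exact hp.ne_zero (by simpa using ht.symm)
  obtain ⟨e, hsq, hnegsq⟩ :=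
    exists_unit_not_isSquare_of_sq_eq_natCast ht ht0 (smul_sqrt_prime hp ht hσ)
  have he : (e : 𝓞 K) * σ • (e : 𝓞 K) = 1 := by
    refine (unit_mul_smul_eq_one_or_neg_one hσ e).resolve_right fun h ↦ hnorm e ?_
    rw [mul_smul_eq_norm hσ] at h
    exact_mod_cast h
  -- `σ (1 + e) = e⁻¹ * (1 + e)`, so the ideal generated by `1 + e` is invariant.
  refine ⟨1 + e, fun h0 ↦ hnegsq ⟨1, Units.ext ?_⟩, ?_, fun hT ↦ ?_⟩
  · push_cast
    linear_combination -h0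
  · rw [smul_ideal_span_singleton, smul_add, smul_one,
      ← Ideal.span_singleton_mul_left_unit e.isUnit]
    congr 2
    linear_combination he
  · rcases isSquare_or_isSquare_neg_of_span_one_add_mem (unit_mul_smul_eq_one_or_neg_one hσ) he hT
      with h | h
    exacts [hsq h, hnegsq h]

theorem exists_unit_norm_eq_neg_one (hp : p.Prime) (h3 : p % 4 ≠ 3) (ht : t ^ 2 = p)
    (hσ : σ ≠ 1) : ∃ u : (𝓞 K)ˣ, Algebra.norm ℤ (u : 𝓞 K) = -1 := by
  by_contra! hnorm
  obtain ⟨x, hx0, hxσ, hxT⟩ :=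
    exists_smul_span_eq_and_notMem_signedPrincipalSubmonoid hp ht hσ hnorm
  exact hxT (mem_of_smul_eq_of_sqrt_prime hp ht hσ le_rfl (fun h ↦ absurd h h3)
    (by simpa using hx0) hxσ)

theorem isPrincipal_of_sq_eq_span_two (hp : p.Prime) (h3 : p % 4 = 3) (ht : t ^ 2 = p)
    (hσ : σ ≠ 1) {Q : Ideal (𝓞 K)} (hQ : Q ^ 2 = Ideal.span {2}) : Q.IsPrincipal := by
  have hnorm (u : (𝓞 K)ˣ) : Algebra.norm ℤ (u : 𝓞 K) ≠ -1 := by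
    simpa only [one_pow] using norm_ne_neg_sq hp h3 ht hσ u 1 one_ne_zero
  obtain ⟨x, hx0, hxσ, hxT⟩ :=
    exists_smul_span_eq_and_notMem_signedPrincipalSubmonoid hp ht hσ hnorm
  have hx : Ideal.span {x} ∈ signedPrincipalSubmonoid σ ⊔ Submonoid.powers Q := by
    refine mem_of_smul_eq_of_sqrt_prime hp ht hσ le_sup_left (fun _ Q' hQ' ↦ ?_)
      (by simpa using hx0) hxσ
    rw [pow_left_injective two_ne_zero (hQ'.trans hQ.symm)]
    exact Submonoid.mem_sup_right (Submonoid.mem_powers Q)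
  have hQT : Q ^ 2 ∈ signedPrincipalSubmonoid σ :=
    hQ ▸ span_natCast_mem_signedPrincipalSubmonoid 2
  obtain ⟨_, ⟨r, -, rfl⟩, hr⟩ := (mem_or_eq_mul_of_mem_sup_powers hQT hx).resolve_left hxT
  have hr0 : r ≠ 0 := by
    rintro rfl
    exact hx0 (by simpa using hr)
  exact isPrincipal_of_span_singleton_mul_isPrincipal hr0 ⟨x, hr.symm⟩

theorem isPrincipal_of_smul_eq_of_sqrt_prime (hp : p.Prime) (ht : t ^ 2 = p) (hσ : σ ≠ 1)
    {J : Ideal (𝓞 K)} (hJ0 : J ≠ ⊥) (hJ : σ • J = J) : J.IsPrincipal :=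
  mem_of_smul_eq_of_sqrt_prime hp ht hσ (M := Ideal.isPrincipalSubmonoid (𝓞 K))
    signedPrincipalSubmonoid_le_isPrincipalSubmonoid
    (fun h3 _ hQ ↦ isPrincipal_of_sq_eq_span_two hp h3 ht hσ hQ) hJ0 hJ

end SqrtPrime

/-- For a prime `p`, the class number of `ℚ(√p)` is odd. -/
theorem classNumber_real_quadratic_sqrt_prime_odd
    (p : ℕ) (hp : p.Prime)
    (K : Type*) [Field K] [NumberField K]
    (h2 : Module.finrank ℚ K = 2) (θ : K) (hθ : θ ^ 2 = (p : K)) :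
    Odd (NumberField.classNumber K) := by
  have : Algebra.IsQuadraticExtension ℚ K := ⟨h2⟩
  obtain ⟨σ, hσ⟩ : ∃ σ : Gal(K/ℚ), σ ≠ 1 := by
    have : Nontrivial Gal(K/ℚ) := Finite.one_lt_card_iff_nontrivial.1 <| by
      rw [natCard_gal_quadratic]
      exact one_lt_two
    exact exists_ne 1
  have hint : IsIntegral ℤ θ := .of_pow two_pos (hθ ▸ isIntegral_natCast p)
  obtain ⟨t, rfl⟩ : ∃ t : 𝓞 K, (t : K) = θ := ⟨⟨θ, hint⟩, rfl⟩
  have ht : t ^ 2 = p := RingOfIntegers.ext (by simpa using hθ)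
  refine odd_classNumber_of_isPrincipal_of_smul_eq hσ ?_
    fun _ ↦ isPrincipal_of_smul_eq_of_sqrt_prime hp ht hσ
  by_cases h3 : p % 4 = 3
  · exact .inr (norm_ne_neg_sq hp h3 ht hσ)
  · exact .inl (exists_unit_norm_eq_neg_one hp h3 ht hσ)
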